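/- Let s ≥ 2, ϑ ≥ 0, and take the second-order RKC2 coefficients: ω0 = 1 + ϑ/s², ω1 = T_s′(ω0)/T_s″(ω0), b_j = T_j″(ω0)/T_j′(ω0)² for 2 ≤ j ≤ s, b_0 = b_1 = b_2, a_j = 1 − b_j T_j(ω0), with μ_j, ν_j, κ_j, γ_j the RKC coefficients. Set C_s = Σ_{j=1}^{s} (b_s/b_j) U_{s−j}(ω0) μ_j. Let f : ℝⁿ → ℝⁿ be twice continuously differentiable with ‖f″(x)‖ ≤ C_{f″} for all x. Let yⁿ, ŷⁿ ∈ ℝⁿ and Δt > 0, and assume the Jacobian matrix J of f at yⁿ is symmetric with all eigenvalues in [−ρ, 0], where Δt·ρ ≤ 2ω0/ω1. Define the exact RKC step: d_0 = 0, d_1 = μ_1 Δt f(yⁿ), d_j = ν_j d_{j−1} + κ_j d_{j−2} + μ_j Δt f(yⁿ + d_{j−1}) + γ_j Δt f(yⁿ), y^{n+1} = yⁿ + d_s; and the mixed-precision step: d̂_0 = 0, d̂_1 = μ_1 Δt f(ŷⁿ), d̂_j = ν_j d̂_{j−1} + κ_j d̂_{j−2} + μ_j Δt (f(ŷⁿ)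 + Δ̂f_{j−1}) + γ_j Δt f(ŷⁿ), ŷ^{n+1} = ŷⁿ + d̂_s. Assume for all 1 ≤ j ≤ s−1: ‖Δ̂f_j − (f(ŷⁿ + d̂_j) − f(ŷⁿ))‖₂ ≤ min(Ĉ ε Δt, C_Δ ‖ŷⁿ‖₂), ‖d̂_j‖₂ ≤ C_d · min(Δt ‖f(ŷⁿ)‖₂, ‖ŷⁿ‖₂) and ‖d_j‖₂ ≤ C_d · min(Δt ‖f(yⁿ)‖₂, ‖yⁿ‖₂), for constants Ĉ, ε, C_Δ, C_d ≥ 0. Then ‖ŷ^{n+1} − y^{n+1}‖₂ ≤ ‖ŷⁿ − yⁿ‖₂ + C_{f″}(1 + 2C_s) ‖ŷⁿ − yⁿ‖₂² Δt + C_s min(Ĉ ε Δt, C_Δ ‖ŷⁿ‖₂) Δt + C_s C_{f″} C_d² ( min(Δt ‖f(ŷⁿ)‖₂, ‖ŷⁿ‖₂)² + min(Δt ‖f(yⁿ)‖₂, ‖yⁿ‖₂)² ) Δt. -/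

import Mathlib

noncomputable section

/-- Chebyshev polynomial of the first kind, evaluated in an arbitrary ring. -/
def chebT (R : Type*) [Ring R] : ℕ → R → R
  | 0, _ => 1
  | 1, x => x
  | n + 2, x => 2 * x * chebT R (n + 1) x - chebT R n x

/-- Chebyshev polynomial of the second kind, evaluated in an arbitrary ring. -/
def chebU (R : Type*) [Ring R] : ℕ → R → R
  | 0, _ => 1
  | 1, x => 2 * x
  | n + 2, x => 2 * x * chebU R (n + 1) x - chebU R n x

/-- Spectral norm of a real matrix: operator norm induced by the Euclidean norms. -/
def specNorm {m n : ℕ} (A : Matrix (Fin m) (Fin n) ℝ) : ℝ :=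
  ‖(Matrix.toEuclideanLin A).toContinuousLinearMap‖

/-!
The difference of the mixed-precision and the exact stages satisfies the stage recurrence of the
scheme for the linear equation `y' = L y`, with `L` the Jacobian at `yn`, up to residuals made of
the rounding errors and of Taylor remainders. Divided by the weights `b_j`, it solves an
inhomogeneous Chebyshev recurrence for the operator `W = ω0 + ω1 Δt L`. By the discrete Duhamel
formula the initial error is propagated by the stability polynomial
`1 - b_s T_s(ω0) + b_s T_s(W)` and the residual of stage `j` by `(b_s / b_j) U_{s-j}(W)`.

The step size restriction puts the numerical range of `W` into `[-ω0, ω0]`, where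
`|T_k| ≤ T_k(ω0)` and `|U_k| ≤ U_k(ω0)`; these bounds pass to operator norms, because a polynomial
in `W` can be applied to a vector inside a finite-dimensional Krylov space. The stability polynomial
therefore has norm at most one as soon as `b_s T_s(ω0) ≤ 1`, which for the second-order weights is
Laguerre's inequality `p p'' ≤ p'²` for the real-rooted polynomial `T_s`.
-/

open Polynomial

section Chebyshev

theorem eval_mul_eval_iterate_derivative_two_le_sq_of_splits {R : Type*} [CommRing R]
    [LinearOrder R] [IsStrictOrderedRing R] {p : R[X]} (hp : p.Splits) (x : R) :
    p.eval x * (derivative^[2] p).eval x ≤ (derivative p).eval x ^ 2 := by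
  induction hp using Submonoid.closure_induction with
  | mem p hp => rcases hp with ⟨a, rfl⟩ | ⟨a, rfl⟩ <;> simp
  | one => simp
  | mul p q _ _ hp hq =>
    simp only [Function.iterate_succ, Function.iterate_zero, Function.comp_apply, id_eq,
      derivative_mul, derivative_add, eval_add, eval_mul] at hp hq ⊢
    linear_combination q.eval x ^ 2 * hp + p.eval x ^ 2 * hq

theorem splits_T_real (k : ℕ) : (Chebyshev.T ℝ k).Splits := by
  rw [splits_iff_card_roots, Chebyshev.roots_T_real, Chebyshev.natDegree_T, Finset.card_val,
    Finset.card_image_of_injOn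
      ((Finset.range k).nodup_map_iff_injOn.1 (Chebyshev.roots_T_real_nodup k))]
  simp

theorem factorial_le_eval_iterate_derivative_T {m k : ℕ} (hmk : m ≤ k) {x : ℝ} (hx : 1 ≤ x) :
    (m.factorial : ℝ) ≤ (derivative^[m] (Chebyshev.T ℝ k)).eval x := by
  have h := Chebyshev.eval_iterate_derivative_le_of_forall_abs_le_one (n := k) (P := X ^ m)
    (k := m) hx (by simpa using hmk) fun y hy => by
      simpa using pow_le_one₀ (abs_nonneg y) (abs_le.2 hy)
  simpa [iterate_derivative_X_pow_eq_smul, Nat.descFactorial_self] using h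

theorem abs_eval_T_le (k : ℕ) {w x : ℝ} (hx : 1 ≤ x) (hw : |w| ≤ x) :
    |(Chebyshev.T ℝ k).eval w| ≤ (Chebyshev.T ℝ k).eval x := by
  have hx₀ : 0 < x := by linarith
  -- A multiple `σ = ±1` of the rescaled polynomial `y ↦ T_k (w y / x)` competes with `T_k`.
  have hscaled (σ : ℝ) (hσ : |σ| = 1) :
      σ * (Chebyshev.T ℝ k).eval w ≤ (Chebyshev.T ℝ k).eval x := by
    have h := Chebyshev.eval_iterate_derivative_le_of_forall_abs_le_one (n := k) (k := 0) hx
      (P := C σ * (Chebyshev.T ℝ k).comp (C (w / x) * X)) ?_ fun y hy => ?_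
    · simpa [hx₀.ne'] using h
    · refine degree_le_of_natDegree_le ((natDegree_C_mul_le _ _).trans (natDegree_comp_le.trans ?_))
      simpa using Nat.mul_le_mul_left k ((natDegree_C_mul_le (w / x) X).trans natDegree_X_le)
    · have hwy : |w / x * y| ≤ 1 := by
        rw [abs_mul, abs_div, abs_of_pos hx₀]
        exact mul_le_one₀ ((div_le_one hx₀).2 hw) (abs_nonneg y) (abs_le.2 hy)
      simpa [abs_mul, hσ] using Chebyshev.abs_eval_T_real_le_one k hwy
  exact abs_le'.2 ⟨by simpa using hscaled 1 (by simp), by simpa using hscaled (-1) (by simp)⟩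

theorem abs_eval_U_le (k : ℕ) {w x : ℝ} (hx : 1 ≤ x) (hw : |w| ≤ x) :
    |(Chebyshev.U ℝ k).eval w| ≤ (Chebyshev.U ℝ k).eval x := by
  induction k with
  | zero => simp
  | succ k ih =>
    have hU (y : ℝ) : (Chebyshev.U ℝ (k + 1 : ℕ)).eval y =
        y * (Chebyshev.U ℝ k).eval y + (Chebyshev.T ℝ (k + 1 : ℕ)).eval y := by
      simp [Chebyshev.U_eq_X_mul_U_add_T]
    rw [hU, hU]
    calc _ ≤ |w| * |(Chebyshev.U ℝ k).eval w| + |(Chebyshev.T ℝ (k + 1 : ℕ)).eval w| := by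
          rw [← abs_mul]; exact abs_add_le _ _
      _ ≤ _ := by gcongr; exact abs_eval_T_le (k + 1) hx hw

theorem chebT_eq_eval_T (k : ℕ) (x : ℝ) : chebT ℝ k x = (Chebyshev.T ℝ k).eval x := by
  induction k using Nat.twoStepInduction with
  | zero => simp [chebT]
  | one => simp [chebT]
  | more k ih₀ ih₁ =>
    push_cast at ih₁ ⊢
    rw [chebT, ih₀, ih₁, Chebyshev.T_add_two]
    simp

theorem chebU_eq_eval_U (k : ℕ) (x : ℝ) : chebU ℝ k x = (Chebyshev.U ℝ k).eval x := by
  induction k using Nat.twoStepInduction with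
  | zero => simp [chebU]
  | one => simp [chebU]
  | more k ih₀ ih₁ =>
    push_cast at ih₁ ⊢
    rw [chebU, ih₀, ih₁, Chebyshev.U_add_two]
    simp

theorem iterate_deriv_chebT (m k : ℕ) (x : ℝ) :
    deriv^[m] (fun y => chebT ℝ k y) x = (derivative^[m] (Chebyshev.T ℝ k)).eval x := by
  induction m generalizing x with
  | zero => simp [chebT_eq_eval_T]
  | succ m ih =>
    rw [Function.iterate_succ_apply', funext ih, Polynomial.deriv, Function.iterate_succ_apply']

end Chebyshev

section SymmetricOperator

variable {E : Type*} [NormedAddCommGroup E] [InnerProductSpace ℝ E] {A : Module.End ℝ E}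

theorem norm_le_mul_norm_of_abs_inner_le {ι : Type*} [Fintype ι] (B : OrthonormalBasis ι ℝ E)
    {v w : E} {M : ℝ} (hM : 0 ≤ M) (h : ∀ i, |inner ℝ (B i) v| ≤ M * |inner ℝ (B i) w|) :
    ‖v‖ ≤ M * ‖w‖ := by
  refine le_of_sq_le_sq ?_ (by positivity)
  rw [mul_pow, ← B.sum_sq_norm_inner_right, ← B.sum_sq_norm_inner_right, Finset.mul_sum]
  refine Finset.sum_le_sum fun i _ => ?_
  rw [← mul_pow]
  exact pow_le_pow_left₀ (norm_nonneg _) (h i) 2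

theorem isSymmetric_aeval (hA : A.IsSymmetric) (p : ℝ[X]) : (aeval A p).IsSymmetric := by
  induction p using Polynomial.induction_on' with
  | add p q hp hq => simpa using hp.add hq
  | monomial n a =>
    rw [aeval_monomial]
    simpa [← Algebra.smul_def] using (hA.pow n).smul (by simp)

theorem norm_aeval_apply_le_of_hasEigenvalue [FiniteDimensional ℝ E] (hA : A.IsSymmetric)
    {p : ℝ[X]} {M : ℝ} (hM : 0 ≤ M) (hp : ∀ t, A.HasEigenvalue t → |p.eval t| ≤ M) (v : E) :
    ‖aeval A p v‖ ≤ M * ‖v‖ := by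
  refine norm_le_mul_norm_of_abs_inner_le (hA.eigenvectorBasis rfl) hM fun i => ?_
  rw [← isSymmetric_aeval hA,
    Module.End.aeval_apply_of_hasEigenvector (hA.hasEigenvector_eigenvectorBasis rfl i),
    real_inner_smul_left, abs_mul]
  gcongr
  exact hp _ (hA.hasEigenvalue_eigenvalues rfl i)

/-- The compression of an operator `A` to the subspace `K`: restrict to `K`, then project
orthogonally back onto `K`. -/
def compression (A : Module.End ℝ E) (K : Submodule ℝ E) [K.HasOrthogonalProjection] :
    Module.End ℝ K :=
  K.orthogonalProjectionOnto.toLinearMap ∘ₗ A ∘ₗ K.subtype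

variable {K : Submodule ℝ E} [K.HasOrthogonalProjection]

theorem inner_compression_apply (u v : K) :
    inner ℝ u (compression A K v) = inner ℝ (u : E) (A v) := by
  simp [compression]

theorem isSymmetric_compression (hA : A.IsSymmetric) : (compression A K).IsSymmetric := by
  intro u v
  rw [inner_compression_apply, real_inner_comm, inner_compression_apply, real_inner_comm]
  exact hA u v

theorem mem_Icc_of_hasEigenvalue_compression {a c : ℝ}
    (hA : ∀ v, inner ℝ v (A v) ∈ Set.Icc (a * ‖v‖ ^ 2) (c * ‖v‖ ^ 2)) {t : ℝ}
    (ht : (compression A K).HasEigenvalue t) : t ∈ Set.Icc a c := by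
  obtain ⟨v, hv⟩ := ht.exists_hasEigenvector
  have hpos : 0 < ‖v‖ ^ 2 := by have := hv.2; positivity
  have h := hA v
  rw [← inner_compression_apply, hv.apply_eq_smul, real_inner_smul_right,
    real_inner_self_eq_norm_sq] at h
  exact ⟨le_of_mul_le_mul_right h.1 hpos, le_of_mul_le_mul_right h.2 hpos⟩

theorem coe_compression_pow_apply {v : K} {n : ℕ} (hv : ∀ i ≤ n, (A ^ i) (v : E) ∈ K) :
    ((compression A K ^ n) v : E) = (A ^ n) v := by
  induction n with
  | zero => simp
  | succ n ih =>
    have hmem : A ((A ^ n) (v : E)) ∈ K := by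
      simpa only [pow_succ', Module.End.mul_apply] using hv (n + 1) le_rfl
    calc ((compression A K ^ (n + 1)) v : E)
        = K.starProjection (A ((compression A K ^ n) v : K)) := by
          rw [pow_succ', Module.End.mul_apply]; rfl
      _ = A ((A ^ n) (v : E)) := by
          rw [ih fun i hi => hv i (by omega), Submodule.starProjection_eq_self_iff.2 hmem]
      _ = (A ^ (n + 1)) v := by rw [pow_succ', Module.End.mul_apply]

theorem coe_aeval_compression_apply {p : ℝ[X]} {v : K}
    (hv : ∀ i ≤ p.natDegree, (A ^ i) (v : E) ∈ K) :
    (aeval (compression A K) p v : E) = aeval A p v := by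
  simp only [aeval_eq_sum_range, LinearMap.sum_apply, LinearMap.smul_apply, Submodule.coe_sum,
    Submodule.coe_smul]
  refine Finset.sum_congr rfl fun i hi => ?_
  have hi' := Finset.mem_range_succ_iff.1 hi
  rw [coe_compression_pow_apply fun j hj => hv j (hj.trans hi')]

/-- The Krylov space of order `n` generated by `v`, on which polynomials in `A` of degree at most
`n` can be evaluated at `v` through the compression of `A`. -/
def krylovSpace (A : Module.End ℝ E) (n : ℕ) (v : E) : Submodule ℝ E :=
  Submodule.span ℝ (Set.range fun i : Fin (n + 1) => (A ^ (i : ℕ)) v)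

instance (n : ℕ) (v : E) : FiniteDimensional ℝ (krylovSpace A n v) :=
  FiniteDimensional.span_of_finite ℝ (Set.finite_range _)

theorem pow_apply_mem_krylovSpace {n i : ℕ} (hi : i ≤ n) (v : E) :
    (A ^ i) v ∈ krylovSpace A n v :=
  Submodule.subset_span ⟨⟨i, Nat.lt_succ_of_le hi⟩, rfl⟩

theorem norm_aeval_apply_le_of_numericalRange (hA : A.IsSymmetric) {a c : ℝ}
    (hAac : ∀ v, inner ℝ v (A v) ∈ Set.Icc (a * ‖v‖ ^ 2) (c * ‖v‖ ^ 2)) {p : ℝ[X]} {M : ℝ}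
    (hM : 0 ≤ M) (hp : ∀ t ∈ Set.Icc a c, |p.eval t| ≤ M) (v : E) :
    ‖aeval A p v‖ ≤ M * ‖v‖ := by
  set K := krylovSpace A p.natDegree v
  have hK (i : ℕ) (hi : i ≤ p.natDegree) : (A ^ i) v ∈ K := pow_apply_mem_krylovSpace hi v
  have h := norm_aeval_apply_le_of_hasEigenvalue (isSymmetric_compression (K := K) hA) hM
    (fun t ht => hp t (mem_Icc_of_hasEigenvalue_compression hAac ht)) ⟨v, hK 0 (Nat.zero_le _)⟩
  rwa [Submodule.coe_norm, Submodule.coe_norm, coe_aeval_compression_apply hK] at h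

end SymmetricOperator

theorem eq_sum_aeval_U_of_recurrence {R E : Type*} [CommRing R] [AddCommGroup E] [Module R E]
    (W : Module.End R E) {s : ℕ} {x g : ℕ → E} (h₀ : x 0 = 0) (h₁ : x 1 = g 1)
    (h : ∀ j, j + 2 ≤ s → x (j + 2) = (2 : R) • W (x (j + 1)) - x j + g (j + 2))
    {j : ℕ} (hj : j ≤ s) :
    x j = ∑ i ∈ Finset.Icc 1 j, aeval W (Chebyshev.U R ((j : ℤ) - i)) (g i) := by
  induction j using Nat.twoStepInduction with
  | zero => simp [h₀]
  | one => simp [h₁]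
  | more j ih₀ ih₁ =>
    -- The new summand vanishes because `U_{-1} = 0`.
    have hx : x j =
        ∑ i ∈ Finset.Icc 1 (j + 1), aeval W (Chebyshev.U R ((j : ℤ) - i)) (g i) := by
      rw [Finset.sum_Icc_succ_top (by omega), ← ih₀ (by omega)]
      simp
    have hU (i : ℕ) (v : E) : aeval W (Chebyshev.U R (((j + 2 : ℕ) : ℤ) - i)) v =
        (2 : R) • W (aeval W (Chebyshev.U R (((j + 1 : ℕ) : ℤ) - i)) v) -
          aeval W (Chebyshev.U R ((j : ℤ) - i)) v := by
      rw [show ((j + 2 : ℕ) : ℤ) - i = (j : ℤ) - i + 2 by push_cast; ring,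
        show ((j + 1 : ℕ) : ℤ) - i = (j : ℤ) - i + 1 by push_cast; ring, Chebyshev.U_add_two]
      simp [two_smul, two_mul, add_mul]
    rw [h j hj, ih₁ (by omega), hx, Finset.sum_Icc_succ_top (by omega : 1 ≤ j + 1 + 1), map_sum,
      Finset.smul_sum, ← Finset.sum_sub_distrib]
    exact congrArg₂ _ (Finset.sum_congr rfl fun i _ => (hU i _).symm) (by simp [add_assoc])

section Taylor

variable {E F : Type*} [NormedAddCommGroup E] [NormedSpace ℝ E] [NormedAddCommGroup F]
  [NormedSpace ℝ F] {f : E → F} {C : ℝ}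

theorem norm_sub_sub_fderiv_apply_le {f' : E → E →L[ℝ] F} (hf : ∀ z, HasFDerivAt f (f' z) z)
    {y : E} (hlip : ∀ z, ‖f' z - f' y‖ ≤ C * ‖z - y‖) (v : E) :
    ‖f (y + v) - f y - f' y v‖ ≤ C / 2 * ‖v‖ ^ 2 := by
  have hline (t : ℝ) : HasDerivAt (fun t : ℝ => f (y + t • v) - f y - t • f' y v)
      ((f' (y + t • v) - f' y) v) t := by
    have hpath : HasDerivAt (fun t : ℝ => y + t • v) v t := by
      simpa using ((hasDerivAt_id t).smul_const v).const_add y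
    simpa using (((hf (y + t • v)).comp_hasDerivAt t hpath).sub_const (f y)).fun_sub
      ((hasDerivAt_id t).smul_const (f' y v))
  have hbound (t : ℝ) (ht : t ∈ Set.Ico 0 1) :
      ‖(f' (y + t • v) - f' y) v‖ ≤ C * ‖v‖ ^ 2 * t :=
    calc _ ≤ ‖f' (y + t • v) - f' y‖ * ‖v‖ := ContinuousLinearMap.le_opNorm _ _
      _ ≤ C * ‖y + t • v - y‖ * ‖v‖ := by gcongr; exact hlip _
      _ = C * ‖v‖ ^ 2 * t := by
        rw [add_sub_cancel_left, norm_smul, Real.norm_of_nonneg ht.1]; ring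
  have h := image_norm_le_of_norm_deriv_right_le_deriv_boundary
    (B := fun t => C / 2 * ‖v‖ ^ 2 * t ^ 2) (B' := fun t => C * ‖v‖ ^ 2 * t)
    (fun t _ => (hline t).continuousAt.continuousWithinAt)
    (fun t _ => (hline t).hasDerivWithinAt) (by simp)
    (fun t => ((hasDerivAt_pow 2 t).const_mul _).congr_deriv (by push_cast; ring)) hbound
  simpa using h (Set.right_mem_Icc.2 zero_le_one)

theorem norm_fderiv_sub_le_of_norm_iteratedFDeriv_two_le (hf : ContDiff ℝ 2 f)
    (hC : ∀ x, ‖iteratedFDeriv ℝ 2 f x‖ ≤ C) (x y : E) :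
    ‖fderiv ℝ f x - fderiv ℝ f y‖ ≤ C * ‖x - y‖ := by
  have hdiff : Differentiable ℝ (fderiv ℝ f) :=
    (hf.fderiv_right (m := 1) (by norm_num)).differentiable (by norm_num)
  refine convex_univ.norm_image_sub_le_of_norm_fderiv_le (𝕜 := ℝ)
    (fun z _ => hdiff z) (fun z _ => ?_) (Set.mem_univ y) (Set.mem_univ x)
  rw [← norm_iteratedFDeriv_one, norm_iteratedFDeriv_fderiv]
  exact hC z

theorem norm_sub_sub_apply_le_of_norm_iteratedFDeriv_two_le (hf : ContDiff ℝ 2 f)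
    (hC : ∀ x, ‖iteratedFDeriv ℝ 2 f x‖ ≤ C) {L : E →L[ℝ] F} {y : E} (hL : HasFDerivAt f L y)
    (v : E) : ‖f (y + v) - f y - L v‖ ≤ C / 2 * ‖v‖ ^ 2 := by
  rw [← hL.fderiv]
  exact norm_sub_sub_fderiv_apply_le
    (fun z => (hf.differentiable (by norm_num) z).hasFDerivAt)
    (fun z => norm_fderiv_sub_le_of_norm_iteratedFDeriv_two_le hf hC z y) v

end Taylor

theorem inner_toEuclideanLin_mem_Icc {ι : Type*} [Fintype ι] [DecidableEq ι] {J : Matrix ι ι ℝ}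
    (hJ : J.IsHermitian) {a c : ℝ} (h : ∀ i, hJ.eigenvalues i ∈ Set.Icc a c)
    (v : EuclideanSpace ℝ ι) :
    inner ℝ v (Matrix.toEuclideanLin J v) ∈ Set.Icc (a * ‖v‖ ^ 2) (c * ‖v‖ ^ 2) := by
  set B := hJ.eigenvectorBasis
  have hB (i : ι) : inner ℝ (B i) (Matrix.toEuclideanLin J v) =
      hJ.eigenvalues i * inner ℝ (B i) v := by
    rw [← Matrix.isSymmetric_toEuclideanLin_iff.2 hJ, Matrix.toLpLin_apply,
      hJ.mulVec_eigenvectorBasis]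
    exact real_inner_smul_left _ _ _
  have hsum : inner ℝ v (Matrix.toEuclideanLin J v) =
      ∑ i, hJ.eigenvalues i * inner ℝ (B i) v ^ 2 := by
    rw [← B.sum_inner_mul_inner]
    refine Finset.sum_congr rfl fun i _ => ?_
    rw [hB, real_inner_comm]
    ring
  rw [hsum, ← B.sum_sq_norm_inner_right v, Finset.mul_sum, Finset.mul_sum]
  simp only [Real.norm_eq_abs, sq_abs]
  exact ⟨Finset.sum_le_sum fun i _ => mul_le_mul_of_nonneg_right (h i).1 (sq_nonneg _),
    Finset.sum_le_sum fun i _ => mul_le_mul_of_nonneg_right (h i).2 (sq_nonneg _)⟩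

section Coefficients

/-- `μ`, `ν`, `κ`, `γ` are the coefficients of the `s`-stage Runge–Kutta–Chebyshev scheme with
parameters `ω0`, `ω1` and weights `b`. -/
structure IsRKCCoeffs (s : ℕ) (ω0 ω1 : ℝ) (b μ ν κ γ : ℕ → ℝ) : Prop where
  mu_one : μ 1 = b 1 * ω1
  mu : ∀ j, 2 ≤ j → j ≤ s → μ j = 2 * ω1 * b j / b (j - 1)
  nu : ∀ j, 2 ≤ j → j ≤ s → ν j = 2 * ω0 * b j / b (j - 1)
  kappa : ∀ j, 2 ≤ j → j ≤ s → κ j = -(b j / b (j - 2))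
  gamma : ∀ j, 2 ≤ j → j ≤ s → γ j = -(μ j * (1 - b (j - 1) * chebT ℝ (j - 1) ω0))

/-- `ω1` and `b` are the scaling and the weights of the second-order scheme RKC2. -/
structure IsRKC2Weights (s : ℕ) (ω0 ω1 : ℝ) (b : ℕ → ℝ) : Prop where
  omega_one : ω1 = deriv (fun x => chebT ℝ s x) ω0 / deriv (deriv (fun x => chebT ℝ s x)) ω0
  weight : ∀ j, 2 ≤ j → j ≤ s →
    b j = deriv (deriv (fun x => chebT ℝ j x)) ω0 / (deriv (fun x => chebT ℝ j x) ω0) ^ 2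
  weight_zero : b 0 = b 2
  weight_one : b 1 = b 2

/-- The sign conditions on the parameters of a Runge–Kutta–Chebyshev scheme that make its linear
stability analysis work; the last one says that every `a_j = 1 - b_j T_j(ω0)` is nonnegative. -/
structure IsRKCAdmissible (s : ℕ) (ω0 ω1 : ℝ) (b : ℕ → ℝ) : Prop where
  one_le_omega_zero : 1 ≤ ω0
  omega_one_pos : 0 < ω1
  weight_pos : ∀ j ≤ s, 0 < b j
  weight_mul_chebT_le_one : ∀ j ≤ s, b j * chebT ℝ j ω0 ≤ 1

/-- The stability constant `C_s = ∑ j, (b_s / b_j) U_{s-j}(ω0) μ_j` of an `s`-stage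
Runge–Kutta–Chebyshev scheme. -/
def rkcConstant (s : ℕ) (ω0 : ℝ) (b μ : ℕ → ℝ) : ℝ :=
  ∑ j ∈ Finset.Icc 1 s, b s / b j * chebU ℝ (s - j) ω0 * μ j

variable {s : ℕ} {ω0 ω1 : ℝ} {b μ ν κ γ : ℕ → ℝ}

theorem one_le_chebT (k : ℕ) (hω0 : 1 ≤ ω0) : 1 ≤ chebT ℝ k ω0 := by
  rw [chebT_eq_eval_T]
  exact Chebyshev.one_le_eval_T_real k hω0

theorem chebU_nonneg (k : ℕ) (hω0 : 1 ≤ ω0) : 0 ≤ chebU ℝ k ω0 := by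
  rw [chebU_eq_eval_U]
  exact (abs_nonneg _).trans (abs_eval_U_le k hω0 (abs_of_nonneg (by linarith)).le)

theorem iterate_deriv_chebT_pos {m k : ℕ} (hmk : m ≤ k) (hω0 : 1 ≤ ω0) :
    0 < deriv^[m] (fun x => chebT ℝ k x) ω0 := by
  rw [iterate_deriv_chebT]
  exact (by positivity : (0 : ℝ) < m.factorial).trans_le
    (factorial_le_eval_iterate_derivative_T hmk hω0)

theorem chebT_mul_deriv_deriv_chebT_le (k : ℕ) (x : ℝ) :
    chebT ℝ k x * deriv (deriv fun y => chebT ℝ k y) x ≤ deriv (fun y => chebT ℝ k y) x ^ 2 := by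
  change _ * deriv^[2] _ x ≤ deriv^[1] _ x ^ 2
  rw [iterate_deriv_chebT, iterate_deriv_chebT, chebT_eq_eval_T]
  exact eval_mul_eval_iterate_derivative_two_le_sq_of_splits (splits_T_real k) x

theorem IsRKC2Weights.isRKCAdmissible (hb : IsRKC2Weights s ω0 ω1 b) (hs : 2 ≤ s)
    (hω0 : 1 ≤ ω0) : IsRKCAdmissible s ω0 ω1 b := by
  have hpos (j : ℕ) (hj : 2 ≤ j) (hjs : j ≤ s) : 0 < b j := by
    rw [hb.weight j hj hjs]
    exact div_pos (iterate_deriv_chebT_pos (m := 2) hj hω0)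
      (pow_pos (iterate_deriv_chebT_pos (m := 1) (by omega) hω0) 2)
  have hle (j : ℕ) (hj : 2 ≤ j) (hjs : j ≤ s) : b j * chebT ℝ j ω0 ≤ 1 := by
    rw [hb.weight j hj hjs, div_mul_eq_mul_div, mul_comm]
    exact div_le_one_of_le₀ (chebT_mul_deriv_deriv_chebT_le j ω0) (sq_nonneg _)
  have hT₂ : chebT ℝ 2 ω0 = 2 * ω0 * ω0 - 1 := rfl
  refine ⟨hω0, ?_, fun j hjs => ?_, fun j hjs => ?_⟩
  · rw [hb.omega_one]
    exact div_pos (iterate_deriv_chebT_pos (m := 1) (by omega) hω0)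
      (iterate_deriv_chebT_pos (m := 2) hs hω0)
  · match j with
    | 0 => exact hb.weight_zero ▸ hpos 2 le_rfl hs
    | 1 => exact hb.weight_one ▸ hpos 2 le_rfl hs
    | j + 2 => exact hpos (j + 2) (by omega) hjs
  · match j with
    | 0 =>
      refine le_trans ?_ (hle 2 le_rfl hs)
      rw [hb.weight_zero]
      exact mul_le_mul_of_nonneg_left (one_le_chebT 2 hω0) (hpos 2 le_rfl hs).le
    | 1 =>
      refine le_trans ?_ (hle 2 le_rfl hs)
      rw [hb.weight_one, hT₂, chebT]
      exact mul_le_mul_of_nonneg_left (by nlinarith) (hpos 2 le_rfl hs).le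
    | j + 2 => exact hle (j + 2) (by omega) hjs

namespace IsRKCCoeffs

theorem mu_pos (hc : IsRKCCoeffs s ω0 ω1 b μ ν κ γ) (hb : IsRKCAdmissible s ω0 ω1 b) {j : ℕ}
    (hj : 1 ≤ j) (hjs : j ≤ s) : 0 < μ j := by
  have hω1 := hb.omega_one_pos
  have hbj := hb.weight_pos j hjs
  rcases hj.eq_or_lt with rfl | hj
  · rw [hc.mu_one]
    positivity
  · have hbj' := hb.weight_pos (j - 1) (by omega)
    rw [hc.mu j hj hjs]
    positivity

theorem abs_gamma_le_mu (hc : IsRKCCoeffs s ω0 ω1 b μ ν κ γ) (hb : IsRKCAdmissible s ω0 ω1 b)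
    {j : ℕ} (hj : 2 ≤ j) (hjs : j ≤ s) : |γ j| ≤ μ j := by
  have hμ := hc.mu_pos hb (by omega) hjs
  have hle := hb.weight_mul_chebT_le_one (j - 1) (by omega)
  have hnonneg : 0 ≤ b (j - 1) * chebT ℝ (j - 1) ω0 :=
    mul_nonneg (hb.weight_pos (j - 1) (by omega)).le
      (zero_le_one.trans (one_le_chebT _ hb.one_le_omega_zero))
  rw [hc.gamma j hj hjs, abs_neg, abs_mul, abs_of_pos hμ]
  exact mul_le_of_le_one_right hμ.le (abs_le.2 ⟨by linarith, by linarith⟩)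

theorem rkcConstant_nonneg (hc : IsRKCCoeffs s ω0 ω1 b μ ν κ γ)
    (hb : IsRKCAdmissible s ω0 ω1 b) : 0 ≤ rkcConstant s ω0 b μ := by
  refine Finset.sum_nonneg fun j hj => ?_
  obtain ⟨hj₁, hjs⟩ := Finset.mem_Icc.1 hj
  exact mul_nonneg (mul_nonneg (div_nonneg (hb.weight_pos s le_rfl).le (hb.weight_pos j hjs).le)
    (chebU_nonneg _ hb.one_le_omega_zero)) (hc.mu_pos hb hj₁ hjs).le

end IsRKCCoeffs

end Coefficients

section Stages

variable {E : Type*} [AddCommGroup E] [Module ℝ E] {s : ℕ} {ω0 ω1 Δt : ℝ} {b μ ν κ γ : ℕ → ℝ}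

/-- `d` is the sequence of internal stages of a Runge–Kutta–Chebyshev step, where `F₀` is the value
of the right-hand side at the start of the step and `F j` its value at the `j`-th stage, exact or
perturbed. -/
structure IsRKCStages (s : ℕ) (Δt : ℝ) (μ ν κ γ : ℕ → ℝ) (F₀ : E) (F d : ℕ → E) : Prop where
  zero : d 0 = 0
  one : d 1 = (μ 1 * Δt) • F₀
  step : ∀ j, 2 ≤ j → j ≤ s → d j = ν j • d (j - 1) + κ j • d (j - 2) + (μ j * Δt) • F (j - 1)
    + (γ j * Δt) • F₀

theorem IsRKCStages.sub {F₀ G₀ : E} {F G d c : ℕ → E} (hd : IsRKCStages s Δt μ ν κ γ F₀ F d)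
    (hc : IsRKCStages s Δt μ ν κ γ G₀ G c) :
    IsRKCStages s Δt μ ν κ γ (F₀ - G₀) (F - G) (d - c) where
  zero := by simp [hd.zero, hc.zero]
  one := by simp [hd.one, hc.one, smul_sub]
  step j hj hjs := by
    simp only [Pi.sub_apply, hd.step j hj hjs, hc.step j hj hjs]
    module

/-- The contribution to stage `j` of residuals `r₀` and `r` of the right-hand side at the start of
the step and at the stages. -/
def stageDefect (Δt : ℝ) (μ γ : ℕ → ℝ) (r₀ : E) (r : ℕ → E) : ℕ → E
  | 0 => 0
  | 1 => (μ 1 * Δt) • r₀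
  | j + 2 => (μ (j + 2) * Δt) • r (j + 1) + (γ (j + 2) * Δt) • r₀

/-- The operator `ω0 + ω1 Δt L`, at which a Runge–Kutta–Chebyshev scheme evaluates Chebyshev
polynomials when it is applied to the linear equation `y' = L y`. -/
def rkcOperator (ω0 ω1 Δt : ℝ) (L : Module.End ℝ E) : Module.End ℝ E :=
  ω0 • 1 + (ω1 * Δt) • L

theorem rkcOperator_apply (L : Module.End ℝ E) (v : E) :
    rkcOperator ω0 ω1 Δt L v = ω0 • v + (ω1 * Δt) • L v := rfl

/-- The error `D j` of stage `j` of a linear step with initial error `e`, minus its value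
`b_j (T_j(W) e - T_j(ω0) e)` for a vanishing residual, divided by `b_j`. -/
def scaledError (ω0 : ℝ) (b : ℕ → ℝ) (W : Module.End ℝ E) (e : E) (D : ℕ → E) (j : ℕ) : E :=
  (b j)⁻¹ • D j + chebT ℝ j ω0 • e - aeval W (Chebyshev.T ℝ j) e

theorem scaledError_zero {W : Module.End ℝ E} {e : E} {D : ℕ → E} (hD : D 0 = 0) :
    scaledError ω0 b W e D 0 = 0 := by
  simp [scaledError, chebT, hD]

variable {L : Module.End ℝ E} {e r₀ : E} {r D : ℕ → E}

theorem scaledError_one (hc : IsRKCCoeffs s ω0 ω1 b μ ν κ γ) (hb : b 1 ≠ 0)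
    (hD : D 1 = (μ 1 * Δt) • (L e + r₀)) :
    scaledError ω0 b (rkcOperator ω0 ω1 Δt L) e D 1 =
      (b 1)⁻¹ • stageDefect Δt μ γ r₀ r 1 := by
  simp only [scaledError, stageDefect, hD, hc.mu_one, chebT, Nat.cast_one, Chebyshev.T_one, aeval_X,
    rkcOperator_apply]
  match_scalars <;> field_simp <;> ring

theorem scaledError_add_two (hc : IsRKCCoeffs s ω0 ω1 b μ ν κ γ) (hb : ∀ j ≤ s, b j ≠ 0)
    (hD : IsRKCStages s Δt μ ν κ γ (L e + r₀) (fun j => L (e + D j) + r j) D) {j : ℕ}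
    (hj : j + 2 ≤ s) :
    scaledError ω0 b (rkcOperator ω0 ω1 Δt L) e D (j + 2) =
      (2 : ℝ) • rkcOperator ω0 ω1 Δt L
          (scaledError ω0 b (rkcOperator ω0 ω1 Δt L) e D (j + 1)) -
        scaledError ω0 b (rkcOperator ω0 ω1 Δt L) e D j +
        (b (j + 2))⁻¹ • stageDefect Δt μ γ r₀ r (j + 2) := by
  have hb₀ := hb j (by omega)
  have hb₁ := hb (j + 1) (by omega)
  have hb₂ := hb (j + 2) hj
  have hT (W : Module.End ℝ E) : aeval W (Chebyshev.T ℝ (j + 2 : ℕ)) e =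
      (2 : ℝ) • W (aeval W (Chebyshev.T ℝ (j + 1 : ℕ)) e) - aeval W (Chebyshev.T ℝ j) e := by
    push_cast
    simp [Chebyshev.T_add_two, two_smul, two_mul, add_mul]
  have hT' : chebT ℝ (j + 2) ω0 = 2 * ω0 * chebT ℝ (j + 1) ω0 - chebT ℝ j ω0 := rfl
  have hpred₁ : j + 2 - 1 = j + 1 := rfl
  have hpred₂ : j + 2 - 2 = j := rfl
  have hμ := hc.mu (j + 2) (by omega) hj
  have hγ := hc.gamma (j + 2) (by omega) hj
  rw [hpred₁] at hμ hγ
  simp only [scaledError, stageDefect, hT, hT', hD.step (j + 2) (by omega) hj,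
    hc.nu (j + 2) (by omega) hj, hc.kappa (j + 2) (by omega) hj, hγ, hμ, hpred₁, hpred₂,
    rkcOperator_apply, map_add, map_sub, map_smul]
  match_scalars <;> field_simp
  ring

theorem IsRKCStages.add_eq_stability_add_sum
    (hD : IsRKCStages s Δt μ ν κ γ (L e + r₀) (fun j => L (e + D j) + r j) D) (hs : 1 ≤ s)
    (hc : IsRKCCoeffs s ω0 ω1 b μ ν κ γ) (hb : ∀ j ≤ s, b j ≠ 0) :
    e + D s = aeval (rkcOperator ω0 ω1 Δt L)
        (C (1 - b s * chebT ℝ s ω0) + C (b s) * Chebyshev.T ℝ s) e +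
      ∑ i ∈ Finset.Icc 1 s, (b s / b i) • aeval (rkcOperator ω0 ω1 Δt L)
        (Chebyshev.U ℝ ((s : ℤ) - i)) (stageDefect Δt μ γ r₀ r i) := by
  set W := rkcOperator ω0 ω1 Δt L
  have hsum := eq_sum_aeval_U_of_recurrence W (g := fun i => (b i)⁻¹ • stageDefect Δt μ γ r₀ r i)
    (scaledError_zero hD.zero) (scaledError_one hc (hb 1 hs) hD.one)
    (fun j => scaledError_add_two hc hb hD) le_rfl
  have hbs : b s • scaledError ω0 b W e D s =
      D s + (b s * chebT ℝ s ω0) • e - b s • aeval W (Chebyshev.T ℝ s) e := by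
    rw [scaledError, smul_sub, smul_add, smul_inv_smul₀ (hb s le_rfl), smul_smul]
  calc e + D s = ((1 - b s * chebT ℝ s ω0) • e + b s • aeval W (Chebyshev.T ℝ s) e) +
        b s • scaledError ω0 b W e D s := by rw [hbs]; module
    _ = _ := by
      rw [hsum, Finset.smul_sum]
      congr 1
      · simp [Algebra.algebraMap_eq_smul_one, sub_smul, mul_smul, smul_comm (b s)]
      · exact Finset.sum_congr rfl fun i _ => by rw [map_smul, smul_smul, div_eq_mul_inv]

end Stages

section LinearStability

variable {E : Type*} [NormedAddCommGroup E] {s : ℕ} {ω0 ω1 Δt : ℝ} {b μ ν κ γ : ℕ → ℝ}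

theorem norm_stageDefect_le [NormedSpace ℝ E] (hc : IsRKCCoeffs s ω0 ω1 b μ ν κ γ)
    (hb : IsRKCAdmissible s ω0 ω1 b) (hΔt : 0 ≤ Δt) {r₀ : E} {r : ℕ → E} {δ₀ δ : ℝ} (hδ : 0 ≤ δ)
    (hr₀ : ‖r₀‖ ≤ δ₀) (hr : ∀ j, 1 ≤ j → j ≤ s - 1 → ‖r j‖ ≤ δ) {j : ℕ} (hj : 1 ≤ j)
    (hjs : j ≤ s) : ‖stageDefect Δt μ γ r₀ r j‖ ≤ μ j * Δt * (δ₀ + δ) := by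
  have hμ := hc.mu_pos hb hj hjs
  match j with
  | 1 =>
    rw [stageDefect, norm_smul, Real.norm_of_nonneg (by positivity)]
    gcongr
    linarith
  | j + 2 =>
    calc ‖stageDefect Δt μ γ r₀ r (j + 2)‖
        ≤ μ (j + 2) * Δt * ‖r (j + 1)‖ + |γ (j + 2)| * Δt * ‖r₀‖ := by
          refine (norm_add_le _ _).trans_eq ?_
          rw [norm_smul, norm_smul, norm_mul, norm_mul, Real.norm_of_nonneg hμ.le,
            Real.norm_of_nonneg hΔt, Real.norm_eq_abs]
      _ ≤ μ (j + 2) * Δt * δ + μ (j + 2) * Δt * δ₀ := by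
          gcongr
          · exact hr (j + 1) (by omega) (by omega)
          · exact hc.abs_gamma_le_mu hb (by omega) hjs
      _ = μ (j + 2) * Δt * (δ₀ + δ) := by ring

variable [InnerProductSpace ℝ E] {L : Module.End ℝ E} {ρ : ℝ}

theorem isSymmetric_rkcOperator (hL : L.IsSymmetric) :
    (rkcOperator ω0 ω1 Δt L).IsSymmetric :=
  (LinearMap.IsSymmetric.id.smul (by simp)).add (hL.smul (by simp))

theorem inner_rkcOperator_mem_Icc (hΔt : 0 ≤ Δt) (hω1 : 0 < ω1)
    (hL : ∀ v, inner ℝ v (L v) ∈ Set.Icc (-ρ * ‖v‖ ^ 2) 0) (hstab : Δt * ρ ≤ 2 * ω0 / ω1) (v : E) :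
    inner ℝ v (rkcOperator ω0 ω1 Δt L v) ∈ Set.Icc (-ω0 * ‖v‖ ^ 2) (ω0 * ‖v‖ ^ 2) := by
  have hstab' : ω1 * Δt * ρ ≤ 2 * ω0 := by
    rw [le_div_iff₀ hω1] at hstab
    linarith
  have hlower := mul_le_mul_of_nonneg_left (hL v).1 (by positivity : 0 ≤ ω1 * Δt)
  have hupper := mul_le_mul_of_nonneg_left (hL v).2 (by positivity : 0 ≤ ω1 * Δt)
  rw [rkcOperator_apply, inner_add_right, real_inner_smul_right, real_inner_smul_right,
    real_inner_self_eq_norm_sq]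
  constructor
  · nlinarith [mul_le_mul_of_nonneg_right hstab' (sq_nonneg ‖v‖)]
  · linarith

theorem abs_eval_stabilityPolynomial_le_one {k : ℕ} {β x w : ℝ} (hβ : 0 ≤ β)
    (hβT : β * chebT ℝ k x ≤ 1) (hx : 1 ≤ x) (hw : |w| ≤ x) :
    |(C (1 - β * chebT ℝ k x) + C β * Chebyshev.T ℝ k).eval w| ≤ 1 := by
  have hT : β * |(Chebyshev.T ℝ k).eval w| ≤ β * chebT ℝ k x := by
    rw [chebT_eq_eval_T]
    exact mul_le_mul_of_nonneg_left (abs_eval_T_le k hx hw) hβ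
  rw [← abs_of_nonneg hβ, ← abs_mul, abs_of_nonneg hβ] at hT
  simp only [eval_add, eval_C, eval_mul]
  rw [abs_le] at hT ⊢
  constructor <;> linarith

theorem IsRKCStages.norm_add_le_of_linear {e r₀ : E} {r D : ℕ → E} {δ₀ δ : ℝ}
    (hD : IsRKCStages s Δt μ ν κ γ (L e + r₀) (fun j => L (e + D j) + r j) D) (hs : 1 ≤ s)
    (hc : IsRKCCoeffs s ω0 ω1 b μ ν κ γ) (hb : IsRKCAdmissible s ω0 ω1 b) (hΔt : 0 ≤ Δt)
    (hL : L.IsSymmetric) (hLρ : ∀ v, inner ℝ v (L v) ∈ Set.Icc (-ρ * ‖v‖ ^ 2) 0)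
    (hstab : Δt * ρ ≤ 2 * ω0 / ω1) (hδ : 0 ≤ δ) (hr₀ : ‖r₀‖ ≤ δ₀)
    (hr : ∀ j, 1 ≤ j → j ≤ s - 1 → ‖r j‖ ≤ δ) :
    ‖e + D s‖ ≤ ‖e‖ + rkcConstant s ω0 b μ * Δt * (δ₀ + δ) := by
  have hω0 := hb.one_le_omega_zero
  have hnorm (p : ℝ[X]) (M : ℝ) (hM : 0 ≤ M) (hp : ∀ w, |w| ≤ ω0 → |p.eval w| ≤ M) (v : E) :
      ‖aeval (rkcOperator ω0 ω1 Δt L) p v‖ ≤ M * ‖v‖ :=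
    norm_aeval_apply_le_of_numericalRange (isSymmetric_rkcOperator hL)
      (inner_rkcOperator_mem_Icc hΔt hb.omega_one_pos hLρ hstab) hM
      (fun w hw => hp w (abs_le.2 hw)) v
  rw [hD.add_eq_stability_add_sum hs hc fun j hjs => (hb.weight_pos j hjs).ne', rkcConstant,
    Finset.sum_mul, Finset.sum_mul]
  refine norm_add_le_of_le ?_ (norm_sum_le_of_le _ fun i hi => ?_)
  · simpa using hnorm _ 1 zero_le_one (fun w => abs_eval_stabilityPolynomial_le_one
      (hb.weight_pos s le_rfl).le (hb.weight_mul_chebT_le_one s le_rfl) hω0) e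
  · obtain ⟨hi₁, his⟩ := Finset.mem_Icc.1 hi
    have hbs := hb.weight_pos s le_rfl
    have hbi := hb.weight_pos i his
    have hU (v : E) : ‖aeval (rkcOperator ω0 ω1 Δt L) (Chebyshev.U ℝ ((s : ℤ) - i)) v‖ ≤
        chebU ℝ (s - i) ω0 * ‖v‖ := by
      rw [← Nat.cast_sub his, chebU_eq_eval_U]
      exact hnorm _ _ (chebU_eq_eval_U _ _ ▸ chebU_nonneg _ hω0)
        (fun w => abs_eval_U_le (s - i) hω0) v
    calc _ ≤ b s / b i * (chebU ℝ (s - i) ω0 * (μ i * Δt * (δ₀ + δ))) := by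
          rw [norm_smul, Real.norm_of_nonneg (by positivity)]
          gcongr
          refine (hU _).trans (mul_le_mul_of_nonneg_left ?_ (chebU_nonneg _ hω0))
          exact norm_stageDefect_le hc hb hΔt hδ hr₀ hr hi₁ his
      _ = b s / b i * chebU ℝ (s - i) ω0 * μ i * Δt * (δ₀ + δ) := by ring

end LinearStability

section NonlinearError

variable {E : Type*} [NormedAddCommGroup E]

section Residual

variable [NormedSpace ℝ E] {f : E → E} {L : E →L[ℝ] E} {yn yhat : E}

/-- The remainder of the first-order Taylor expansion of `f` at `y`, with `L` for the derivative. -/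
def taylorRemainder (f : E → E) (L : E →L[ℝ] E) (y v : E) : E :=
  f (y + v) - f y - L v

/-- What is left of the difference of the right-hand sides of a perturbed stage at `yhat + vhat`
and an exact stage at `yn + v` once its linear part `L (yhat - yn + (vhat - v))` is removed; `Δf` is
the computed approximation of `f (yhat + vhat) - f yhat`. -/
def stageResidual (f : E → E) (L : E →L[ℝ] E) (yn yhat Δf v vhat : E) : E :=
  Δf - (f (yhat + vhat) - f yhat) +
    (taylorRemainder f L yn (yhat - yn + vhat) - taylorRemainder f L yn v)

theorem sub_eq_apply_add_taylorRemainder :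
    f yhat - f yn = L (yhat - yn) + taylorRemainder f L yn (yhat - yn) := by
  simp [taylorRemainder]

theorem add_sub_eq_apply_add_stageResidual (Δf v vhat : E) :
    f yhat + Δf - f (yn + v) =
      L (yhat - yn + (vhat - v)) + stageResidual f L yn yhat Δf v vhat := by
  have hpoint : yn + (yhat - yn + vhat) = yhat + vhat := by abel
  simp only [stageResidual, taylorRemainder, hpoint, map_add, map_sub]
  abel

theorem IsRKCStages.sub_eq_linear_add_residual {s : ℕ} {Δt : ℝ} {μ ν κ γ : ℕ → ℝ}
    {d dh Δf : ℕ → E} (hdh : IsRKCStages s Δt μ ν κ γ (f yhat) (fun j => f yhat + Δf j) dh)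
    (L : E →L[ℝ] E) (hd : IsRKCStages s Δt μ ν κ γ (f yn) (fun j => f (yn + d j)) d) :
    IsRKCStages s Δt μ ν κ γ (L (yhat - yn) + taylorRemainder f L yn (yhat - yn))
      (fun j => L (yhat - yn + (dh - d) j) + stageResidual f L yn yhat (Δf j) (d j) (dh j))
      (dh - d) := by
  convert hdh.sub hd using 1
  · exact sub_eq_apply_add_taylorRemainder.symm
  · exact funext fun j => (add_sub_eq_apply_add_stageResidual (Δf j) (d j) (dh j)).symm

theorem norm_stageResidual_le {C M mhat m : ℝ} (hC : 0 ≤ C)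
    (hR : ∀ v, ‖taylorRemainder f L yn v‖ ≤ C / 2 * ‖v‖ ^ 2) {Δf v vhat : E}
    (hΔf : ‖Δf - (f (yhat + vhat) - f yhat)‖ ≤ M) (hvhat : ‖vhat‖ ≤ mhat) (hv : ‖v‖ ≤ m) :
    ‖stageResidual f L yn yhat Δf v vhat‖ ≤
      M + (C * (‖yhat - yn‖ ^ 2 + mhat ^ 2) + C / 2 * m ^ 2) := by
  refine norm_add_le_of_le hΔf (norm_sub_le_of_le ?_ ?_)
  · calc _ ≤ C / 2 * ‖yhat - yn + vhat‖ ^ 2 := hR _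
      _ ≤ C / 2 * (‖yhat - yn‖ + mhat) ^ 2 := by gcongr; exact norm_add_le_of_le le_rfl hvhat
      _ ≤ C / 2 * (2 * (‖yhat - yn‖ ^ 2 + mhat ^ 2)) := by gcongr; exact add_sq_le
      _ = C * (‖yhat - yn‖ ^ 2 + mhat ^ 2) := by ring
  · exact (hR v).trans (by gcongr)

end Residual

variable [InnerProductSpace ℝ E]

theorem mixed_precision_rkc2_error_propagation_general {s : ℕ} (hs : 1 ≤ s) {ω0 ω1 : ℝ}
    {b μ ν κ γ : ℕ → ℝ} (hb : IsRKCAdmissible s ω0 ω1 b) (hc : IsRKCCoeffs s ω0 ω1 b μ ν κ γ)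
    {f : E → E} (hf : ContDiff ℝ 2 f) {C : ℝ} (hC : ∀ x, ‖iteratedFDeriv ℝ 2 f x‖ ≤ C)
    {yn yhat : E} {Δt : ℝ} (hΔt : 0 ≤ Δt) {L : E →L[ℝ] E} (hL : HasFDerivAt f L yn)
    (hLsymm : (L : E →ₗ[ℝ] E).IsSymmetric) {ρ : ℝ}
    (hLρ : ∀ v, inner ℝ v (L v) ∈ Set.Icc (-ρ * ‖v‖ ^ 2) 0) (hstab : Δt * ρ ≤ 2 * ω0 / ω1)
    {d dh Δf : ℕ → E} (hd : IsRKCStages s Δt μ ν κ γ (f yn) (fun j => f (yn + d j)) d)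
    (hdh : IsRKCStages s Δt μ ν κ γ (f yhat) (fun j => f yhat + Δf j) dh)
    {M mhat m : ℝ} (hM : 0 ≤ M)
    (hΔf : ∀ j, 1 ≤ j → j ≤ s - 1 → ‖Δf j - (f (yhat + dh j) - f yhat)‖ ≤ M)
    (hdhm : ∀ j, 1 ≤ j → j ≤ s - 1 → ‖dh j‖ ≤ mhat) (hdm : ∀ j, 1 ≤ j → j ≤ s - 1 → ‖d j‖ ≤ m) :
    ‖yhat + dh s - (yn + d s)‖ ≤ ‖yhat - yn‖
      + C * (1 + 2 * rkcConstant s ω0 b μ) * ‖yhat - yn‖ ^ 2 * Δt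
      + rkcConstant s ω0 b μ * M * Δt
      + rkcConstant s ω0 b μ * C * (mhat ^ 2 + m ^ 2) * Δt := by
  have hC₀ : 0 ≤ C := (norm_nonneg _).trans (hC yn)
  have hR (v : E) : ‖taylorRemainder f L yn v‖ ≤ C / 2 * ‖v‖ ^ 2 :=
    norm_sub_sub_apply_le_of_norm_iteratedFDeriv_two_le hf hC hL v
  have h := (hdh.sub_eq_linear_add_residual L hd).norm_add_le_of_linear hs hc hb hΔt hLsymm hLρ
    hstab (by positivity) (hR _) fun j hj hjs =>
      norm_stageResidual_le hC₀ hR (hΔf j hj hjs) (hdhm j hj hjs) (hdm j hj hjs)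
  have hcs := hc.rkcConstant_nonneg hb
  rw [add_sub_add_comm]
  refine h.trans ?_
  have hslack : 0 ≤ C * ‖yhat - yn‖ ^ 2 * Δt * (1 + rkcConstant s ω0 b μ / 2) +
    rkcConstant s ω0 b μ * C / 2 * m ^ 2 * Δt := by positivity
  linarith

end NonlinearError

/-- error propagation bound for one step of the mixed-precision RKC2 scheme
(first-order-preserving perturbation accuracy) versus the exact RKC2 scheme. -/
theorem mixed_precision_rkc2_error_propagation
    {n : ℕ} (s : ℕ) (hs : 2 ≤ s) (ϑ : ℝ) (hϑ : 0 ≤ ϑ)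
    (ω0 ω1 : ℝ) (b μ ν κ γ : ℕ → ℝ)
    (hω0 : ω0 = 1 + ϑ / (s : ℝ) ^ 2)
    (hω1 : ω1 = deriv (fun x => chebT ℝ s x) ω0 / deriv (deriv (fun x => chebT ℝ s x)) ω0)
    (hb : ∀ j, 2 ≤ j → j ≤ s →
      b j = deriv (deriv (fun x => chebT ℝ j x)) ω0 / (deriv (fun x => chebT ℝ j x) ω0) ^ 2)
    (hb0 : b 0 = b 2) (hb1 : b 1 = b 2)
    (hμ1 : μ 1 = b 1 * ω1)
    (hμ : ∀ j, 2 ≤ j → j ≤ s → μ j = 2 * ω1 * b j / b (j - 1))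
    (hν : ∀ j, 2 ≤ j → j ≤ s → ν j = 2 * ω0 * b j / b (j - 1))
    (hκ : ∀ j, 2 ≤ j → j ≤ s → κ j = -(b j / b (j - 2)))
    (hγ : ∀ j, 2 ≤ j → j ≤ s → γ j = -(μ j * (1 - b (j - 1) * chebT ℝ (j - 1) ω0)))
    (Cs : ℝ) (hCs : Cs = ∑ j ∈ Finset.Icc 1 s, b s / b j * chebU ℝ (s - j) ω0 * μ j)
    (f : EuclideanSpace ℝ (Fin n) → EuclideanSpace ℝ (Fin n))
    (hf : ContDiff ℝ 2 f)
    (Cf'' : ℝ) (hCf'' : ∀ x, ‖iteratedFDeriv ℝ 2 f x‖ ≤ Cf'')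
    (yn yhat : EuclideanSpace ℝ (Fin n)) (Δt : ℝ) (hΔt : 0 < Δt)
    (J : Matrix (Fin n) (Fin n) ℝ) (hJsymm : J.IsHermitian)
    (hJ : HasFDerivAt f ((Matrix.toEuclideanLin J).toContinuousLinearMap) yn)
    (ρ : ℝ) (hρ : 0 ≤ ρ) (heig : ∀ i, hJsymm.eigenvalues i ∈ Set.Icc (-ρ) 0)
    (hstab : Δt * ρ ≤ 2 * ω0 / ω1)
    -- exact RKC2 step
    (d : ℕ → EuclideanSpace ℝ (Fin n))
    (hd0 : d 0 = 0) (hd1 : d 1 = (μ 1 * Δt) • f yn)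
    (hd : ∀ j, 2 ≤ j → j ≤ s →
      d j = ν j • d (j - 1) + κ j • d (j - 2) + (μ j * Δt) • f (yn + d (j - 1))
        + (γ j * Δt) • f yn)
    (yn' : EuclideanSpace ℝ (Fin n)) (hyn' : yn' = yn + d s)
    -- mixed-precision RKC2 step
    (Δf : ℕ → EuclideanSpace ℝ (Fin n))
    (dh : ℕ → EuclideanSpace ℝ (Fin n))
    (hdh0 : dh 0 = 0) (hdh1 : dh 1 = (μ 1 * Δt) • f yhat)
    (hdh : ∀ j, 2 ≤ j → j ≤ s →
      dh j = ν j • dh (j - 1) + κ j • dh (j - 2) + (μ j * Δt) • (f yhat + Δf (j - 1))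
        + (γ j * Δt) • f yhat)
    (yhat' : EuclideanSpace ℝ (Fin n)) (hyhat' : yhat' = yhat + dh s)
    -- assumptions on the perturbations and internal stages
    (Chat ε CΔ Cd : ℝ) (hChat : 0 ≤ Chat) (hε : 0 ≤ ε) (hCΔ : 0 ≤ CΔ) (hCd : 0 ≤ Cd)
    (hΔf : ∀ j, 1 ≤ j → j ≤ s - 1 →
      ‖Δf j - (f (yhat + dh j) - f yhat)‖ ≤ min (Chat * ε * Δt) (CΔ * ‖yhat‖))
    (hdhb : ∀ j, 1 ≤ j → j ≤ s - 1 →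
      ‖dh j‖ ≤ Cd * min (Δt * ‖f yhat‖) ‖yhat‖)
    (hdb : ∀ j, 1 ≤ j → j ≤ s - 1 →
      ‖d j‖ ≤ Cd * min (Δt * ‖f yn‖) ‖yn‖) :
    ‖yhat' - yn'‖ ≤ ‖yhat - yn‖ + Cf'' * (1 + 2 * Cs) * ‖yhat - yn‖ ^ 2 * Δt
      + Cs * min (Chat * ε * Δt) (CΔ * ‖yhat‖) * Δt
      + Cs * Cf'' * Cd ^ 2 *
          ((min (Δt * ‖f yhat‖) ‖yhat‖) ^ 2 + (min (Δt * ‖f yn‖) ‖yn‖) ^ 2) * Δt := by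
  have hω0' : 1 ≤ ω0 := by rw [hω0]; exact le_add_of_nonneg_right (by positivity)
  have hL (v : EuclideanSpace ℝ (Fin n)) :
      inner ℝ v (Matrix.toEuclideanLin J v) ∈ Set.Icc (-ρ * ‖v‖ ^ 2) 0 := by
    simpa using inner_toEuclideanLin_mem_Icc hJsymm heig v
  subst hCs hyn' hyhat'
  refine (mixed_precision_rkc2_error_propagation_general (by omega)
    (IsRKC2Weights.isRKCAdmissible ⟨hω1, hb, hb0, hb1⟩ hs hω0') ⟨hμ1, hμ, hν, hκ, hγ⟩ hf hCf''
    hΔt.le hJ (Matrix.isSymmetric_toEuclideanLin_iff.2 hJsymm) hL hstab ⟨hd0, hd1, hd⟩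
    ⟨hdh0, hdh1, hdh⟩ (by positivity) hΔf hdhb hdb).trans_eq ?_
  rw [rkcConstant]
  ring
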